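/- arXiv:1006.2488 — 3 statements merged into one kernel-verified Lean document; each statement's English description precedes it below -/
import Mathlib

section
/- Let $f : I \subset [0,\infty) \to \mathbb{R}$ be twice differentiable on the interior $I^\circ$ of $I$ with $f''$ integrable on $[a,b]$, where $a, b \in I^\circ$ and $a < b$. Let $q \ge 1$, suppose $|f''|^q$ is $s$-convex in the second sense on $[a,b]$ for some fixed $s \in (0,1]$, and suppose $M > 0$ satisfies $|f''(u)| \le M$ for all $u \in [a,b]$. Then $\left| \frac{1}{b-a}\int_a^b f(u)\,du - f\!\left(\frac{a+b}{2}\right) \right| \le M \left( \frac{3(s^2 + 3s + 4)}{(s+1)(s+2)(s+3)} \right)^{1/q} \frac{(b-a)^2}{24}$. -/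
open MeasureTheory Set intervalIntegral

/-!
Put `c = (a + b) / 2`. Since `|f''| ≤ M`, the function `f` stays within `M / 2 * (u - c) ^ 2` of
its tangent line at `c`. The average of that tangent line over `[a, b]` is `f c`, and the average of
`M / 2 * (u - c) ^ 2` is `M * (b - a) ^ 2 / 24`, which is the classical midpoint estimate.

The constant depending on `s` is the ratio of `∫ t in 0..1, t ^ 2 * (t ^ s + (1 - t) ^ s)` to
`∫ t in 0..1, t ^ 2`. As `t ^ s + (1 - t) ^ s ≥ t + (1 - t) = 1` on `[0, 1]` for `s ≤ 1`, it is
at least `1`, and so is its `q`-th root: the classical estimate implies the stated one.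
-/

section MidpointRule

variable {E : Type*} [NormedAddCommGroup E] [NormedSpace ℝ E]

theorem norm_sub_sub_deriv_zero_le {g g' : ℝ → E} {K : ℝ}
    (hg : ∀ t ∈ Icc (0 : ℝ) 1, HasDerivWithinAt g (g' t) (Icc 0 1) t)
    (hK : ∀ t ∈ Icc (0 : ℝ) 1, ‖g' t - g' 0‖ ≤ K * t) :
    ‖g 1 - g 0 - g' 0‖ ≤ K / 2 := by
  let R : ℝ → E := fun t => g t - g 0 - t • g' 0
  have hR : ∀ t ∈ Icc (0 : ℝ) 1, HasDerivWithinAt R (g' t - g' 0) (Icc 0 1) t := fun t ht =>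
    (((hg t ht).sub_const (g 0)).sub ((hasDerivWithinAt_id t _).smul_const (g' 0))).congr_deriv
      (by rw [one_smul])
  have hR_right : ∀ t ∈ Ico (0 : ℝ) 1, HasDerivWithinAt R (g' t - g' 0) (Ici t) t := fun t ht =>
    (hR t (Ico_subset_Icc_self ht)).mono_of_mem_nhdsWithin (Icc_mem_nhdsGE_of_mem ht)
  have hbound (t : ℝ) : HasDerivAt (fun t => K / 2 * t ^ 2) (K * t) t :=
    ((hasDerivAt_pow 2 t).const_mul _).congr_deriv (by norm_num; ring)
  have hR_one : ‖R 1‖ ≤ K / 2 * 1 ^ 2 :=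
    image_norm_le_of_norm_deriv_right_le_deriv_boundary
      (fun t ht => (hR t ht).continuousWithinAt) hR_right (by simp [R]) hbound
      (fun t ht => hK t (Ico_subset_Icc_self ht)) (right_mem_Icc.2 zero_le_one)
  simpa only [R, one_smul, one_pow, mul_one] using hR_one

theorem norm_sub_sub_smul_deriv_le {f f' : ℝ → E} {D : Set ℝ} {c u M : ℝ} (hD : Convex ℝ D)
    (hf : ∀ x ∈ D, HasDerivWithinAt f (f' x) D x)
    (hM : ∀ x ∈ D, ‖f' x - f' c‖ ≤ M * |x - c|) (hc : c ∈ D) (hu : u ∈ D) :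
    ‖f u - f c - (u - c) • f' c‖ ≤ M / 2 * (u - c) ^ 2 := by
  let γ : ℝ → ℝ := fun t => c + t * (u - c)
  have hγ_mem : ∀ t ∈ Icc (0 : ℝ) 1, γ t ∈ D := fun t ht => hD.add_smul_sub_mem hc hu ht
  have hγ_deriv (t : ℝ) : HasDerivAt γ (u - c) t := by
    simpa only [one_mul, id_eq] using! ((hasDerivAt_id t).mul_const (u - c)).const_add c
  have hγ_zero : γ 0 = c := by simp [γ]
  have hγ_one : γ 1 = u := by simp [γ]
  have hfγ : ∀ t ∈ Icc (0 : ℝ) 1,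
      HasDerivWithinAt (f ∘ γ) ((u - c) • f' (γ t)) (Icc 0 1) t := fun t ht =>
    (hf _ (hγ_mem t ht)).scomp t (hγ_deriv t).hasDerivWithinAt hγ_mem
  have hfγ_lip : ∀ t ∈ Icc (0 : ℝ) 1,
      ‖(u - c) • f' (γ t) - (u - c) • f' (γ 0)‖ ≤ M * (u - c) ^ 2 * t := fun t ht =>
    calc ‖(u - c) • f' (γ t) - (u - c) • f' (γ 0)‖
        = |u - c| * ‖f' (γ t) - f' c‖ := by
          rw [← smul_sub, norm_smul, Real.norm_eq_abs, hγ_zero]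
      _ ≤ |u - c| * (M * |γ t - c|) := by gcongr; exact hM _ (hγ_mem t ht)
      _ = M * |u - c| ^ 2 * t := by
          rw [add_sub_cancel_left, abs_mul, abs_of_nonneg ht.1]
          ring
      _ = M * (u - c) ^ 2 * t := by rw [sq_abs]
  have htaylor := norm_sub_sub_deriv_zero_le hfγ hfγ_lip
  rwa [Function.comp_apply, Function.comp_apply, hγ_zero, hγ_one, mul_div_right_comm] at htaylor

theorem integral_sub_midpoint (a b : ℝ) : ∫ x in a..b, (x - (a + b) / 2) = 0 := by
  rw [integral_comp_sub_right (fun x => x), integral_id]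
  ring

theorem integral_sub_midpoint_sq (a b : ℝ) :
    ∫ x in a..b, (x - (a + b) / 2) ^ 2 = (b - a) ^ 3 / 12 := by
  rw [integral_comp_sub_right (fun x => x ^ 2), integral_pow]
  norm_num
  ring

theorem integral_sub_sub_smul_midpoint [CompleteSpace E] {f : ℝ → E} {a b : ℝ}
    (hf : IntervalIntegrable f volume a b) (p v : E) :
    ∫ x in a..b, (f x - p - (x - (a + b) / 2) • v) = (∫ x in a..b, f x) - (b - a) • p := by
  have hlin : IntervalIntegrable (fun x => (x - (a + b) / 2) • v) volume a b :=
    Continuous.intervalIntegrable (by fun_prop) a b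
  rw [integral_sub (hf.sub intervalIntegrable_const) hlin, integral_sub hf intervalIntegrable_const,
    intervalIntegral.integral_smul_const, integral_sub_midpoint, zero_smul, sub_zero,
    intervalIntegral.integral_const]

theorem norm_integral_sub_smul_midpoint_le [CompleteSpace E] {f f' : ℝ → E} {a b M : ℝ}
    (hab : a < b) (hfc : ContinuousOn f (Icc a b)) (hf : ∀ x ∈ Ioo a b, HasDerivAt f (f' x) x)
    (hM : ∀ x ∈ Ioo a b, ‖f' x - f' ((a + b) / 2)‖ ≤ M * |x - (a + b) / 2|) :
    ‖(∫ x in a..b, f x) - (b - a) • f ((a + b) / 2)‖ ≤ M * ((b - a) ^ 3 / 24) := by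
  set c := (a + b) / 2 with hc
  have hcmem : c ∈ Ioo a b := ⟨by linarith, by linarith⟩
  have htaylor : ∀ x ∈ Ioo a b, ‖f x - f c - (x - c) • f' c‖ ≤ M / 2 * (x - c) ^ 2 := fun x hx =>
    norm_sub_sub_smul_deriv_le (convex_Ioo a b) (fun y hy => (hf y hy).hasDerivWithinAt) hM hcmem hx
  have htaylor_ae :
      ∀ᵐ x, x ∈ Ioc a b → ‖f x - f c - (x - c) • f' c‖ ≤ M / 2 * (x - c) ^ 2 := by
    filter_upwards [Measure.ae_ne volume b] with x hxb hx
    exact htaylor x ⟨hx.1, hx.2.lt_of_ne hxb⟩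
  calc ‖(∫ x in a..b, f x) - (b - a) • f c‖
      = ‖∫ x in a..b, (f x - f c - (x - c) • f' c)‖ := by
        rw [integral_sub_sub_smul_midpoint (hfc.intervalIntegrable_of_Icc hab.le)]
    _ ≤ ∫ x in a..b, M / 2 * (x - c) ^ 2 :=
        intervalIntegral.norm_integral_le_of_norm_le hab.le htaylor_ae
          (Continuous.intervalIntegrable (by fun_prop) a b)
    _ = M * ((b - a) ^ 3 / 24) := by
        rw [intervalIntegral.integral_const_mul, integral_sub_midpoint_sq]
        ring

theorem stmt10_general [CompleteSpace E] {f f' f'' : ℝ → E} {a b M : ℝ} (hab : a < b)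
    (hfc : ContinuousOn f (Icc a b)) (hf' : ∀ x ∈ Ioo a b, HasDerivAt f (f' x) x)
    (hf'' : ∀ x ∈ Ioo a b, HasDerivAt f' (f'' x) x) (hM : ∀ x ∈ Ioo a b, ‖f'' x‖ ≤ M) :
    ‖(1 / (b - a)) • (∫ x in a..b, f x) - f ((a + b) / 2)‖ ≤ M * ((b - a) ^ 2 / 24) := by
  have hba : 0 < b - a := sub_pos.2 hab
  have hmid : (a + b) / 2 ∈ Ioo a b := ⟨by linarith, by linarith⟩
  have hlip : ∀ x ∈ Ioo a b, ‖f' x - f' ((a + b) / 2)‖ ≤ M * |x - (a + b) / 2| := fun x hx =>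
    (convex_Ioo a b).norm_image_sub_le_of_norm_hasDerivWithin_le
      (fun y hy => (hf'' y hy).hasDerivWithinAt) hM hmid hx
  calc ‖(1 / (b - a)) • (∫ x in a..b, f x) - f ((a + b) / 2)‖
      = ‖(1 / (b - a)) • ((∫ x in a..b, f x) - (b - a) • f ((a + b) / 2))‖ := by
        rw [smul_sub, smul_smul, one_div_mul_cancel hba.ne', one_smul]
    _ = 1 / (b - a) * ‖(∫ x in a..b, f x) - (b - a) • f ((a + b) / 2)‖ :=
        norm_smul_of_nonneg (by positivity) _
    _ ≤ 1 / (b - a) * (M * ((b - a) ^ 3 / 24)) := by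
        gcongr
        exact norm_integral_sub_smul_midpoint_le hab hfc hf' hlip
    _ = M * ((b - a) ^ 2 / 24) := by field_simp

end MidpointRule

theorem one_le_sConvex_midpoint_ratio {s : ℝ} (hs₀ : 0 ≤ s) (hs₁ : s ≤ 1) :
    1 ≤ 3 * (s ^ 2 + 3 * s + 4) / ((s + 1) * (s + 2) * (s + 3)) := by
  have hfactor : 3 * (s ^ 2 + 3 * s + 4) - (s + 1) * (s + 2) * (s + 3)
      = (1 - s) * (s ^ 2 + 4 * s + 6) := by ring
  rw [one_le_div (by positivity), ← sub_nonneg, hfactor]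
  exact mul_nonneg (sub_nonneg.2 hs₁) (by positivity)

theorem stmt10 (I : Set ℝ) (hI : Convex ℝ I) (hI0 : I ⊆ Set.Ici (0:ℝ)) (f f' f'' : ℝ → ℝ) (a b : ℝ)
    (ha : a ∈ interior I) (hb : b ∈ interior I) (hab : a < b)
    (hf' : ∀ y ∈ interior I, HasDerivAt f (f' y) y)
    (hf'' : ∀ y ∈ interior I, HasDerivAt f' (f'' y) y)
    (hfint : IntervalIntegrable f'' MeasureTheory.volume a b)
    (q : ℝ) (hq : 1 ≤ q)
    (s : ℝ) (hs : s ∈ Set.Ioc (0:ℝ) 1)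
    (hconv : ∀ u ∈ Set.Icc a b, ∀ v ∈ Set.Icc a b, ∀ t ∈ Set.Icc (0:ℝ) 1,
      |f'' (t * u + (1 - t) * v)| ^ q ≤ t ^ s * |f'' u| ^ q + (1 - t) ^ s * |f'' v| ^ q)
    (M : ℝ) (hM : 0 < M) (hbd : ∀ u ∈ Set.Icc a b, |f'' u| ≤ M) :
    |(1 / (b - a)) * (∫ u in a..b, f u) - f ((a + b) / 2)|
      ≤ M * (3 * (s ^ 2 + 3 * s + 4) / ((s + 1) * (s + 2) * (s + 3))) ^ (1 / q) *
          ((b - a) ^ 2 / 24) := by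
  have hsub : Icc a b ⊆ interior I := hI.interior.ordConnected.out ha hb
  have hIoo : Ioo a b ⊆ interior I := Ioo_subset_Icc_self.trans hsub
  have hmidpoint := stmt10_general hab (HasDerivAt.continuousOn fun x hx => hf' x (hsub hx))
    (fun x hx => hf' x (hIoo hx)) (fun x hx => hf'' x (hIoo hx))
    (fun x hx => hbd x (Ioo_subset_Icc_self hx))
  have hratio := Real.one_le_rpow (one_le_sConvex_midpoint_ratio hs.1.le hs.2)
    (one_div_nonneg.2 (zero_le_one.trans hq))
  exact hmidpoint.trans (by gcongr; exact le_mul_of_one_le_right hM.le hratio)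
end

section
/- Let $f : I \subset [0,\infty) \to \mathbb{R}$ be twice differentiable on the interior $I^\circ$ of $I$ with $f''$ integrable on $[a,b]$, where $a, b \in I^\circ$ and $a < b$. Let $p, q > 1$ with $\frac{1}{p} + \frac{1}{q} = 1$, and suppose $|f''|^q$ is $s$-concave in the second sense on $[a,b]$ for some fixed $s \in (0,1]$. Then for every $x \in [a,b]$: $\left| \frac{1}{b-a}\int_a^b f(u)\,du - f(x) + \left(x - \frac{a+b}{2}\right) f'(x) \right| \le \frac{2^{(s-1)/q}}{(2p+1)^{1/p}(b-a)} \cdot \frac{(x-a)^3 \left| f''\!\left(\frac{x+a}{2}\right)\right| + (b-x)^3 \left| f''\!\left(\frac{b+x}{2}\right)\right|}{2}$. -/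
open MeasureTheory Set intervalIntegral

/-!
Integrating by parts twice with the Peano kernel `(u - k) ^ 2`, once on `[a, x]` with `k = a` and
once on `[x, b]` with `k = b`, expresses the Ostrowski-type error as
`1 / (2 (b - a))` times `∫_a^x (u - a) ^ 2 f'' - ∫_b^x (u - b) ^ 2 f''`. Hölder's inequality
separates the kernel from `f''`. Finally `u ↦ k + x - u` maps the interval between `k` and `x` onto
itself and fixes its midpoint, so averaging `|f''| ^ q` with its reflection and using `s`-concavity
at `t = 1 / 2` bounds the mean of `|f''| ^ q` by `2 ^ (s - 1) |f'' ((x + k) / 2)| ^ q`.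
Oriented integrals `∫_k^x` let one lemma serve both halves.
-/

/-- `g` is `s`-concave in the second sense on `S`; here `g` will be `|f''| ^ q`. Neither
`S ⊆ [0, ∞)` nor `s ∈ (0, 1]` is built into the definition. -/
def SConcaveOn (s : ℝ) (S : Set ℝ) (g : ℝ → ℝ) : Prop :=
  ∀ u ∈ S, ∀ v ∈ S, ∀ t ∈ Icc (0 : ℝ) 1,
    g (t * u + (1 - t) * v) ≥ t ^ s * g u + (1 - t) ^ s * g v

theorem SConcaveOn.add_le_two_rpow_mul_midpoint {s : ℝ} {S : Set ℝ} {g : ℝ → ℝ}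
    (hg : SConcaveOn s S g) {u v : ℝ} (hu : u ∈ S) (hv : v ∈ S) :
    g u + g v ≤ 2 ^ s * g ((u + v) / 2) := by
  have hhalf := hg u hu v hv (1 / 2) ⟨by norm_num, by norm_num⟩
  rw [sub_half, ← mul_add, ← mul_add, one_div, Real.inv_rpow zero_le_two,
    ← div_eq_inv_mul (u + v)] at hhalf
  exact (inv_mul_le_iff₀ (by positivity)).mp hhalf

theorem add_reflect_le_mul_midpoint {g : ℝ → ℝ} {a b C : ℝ}
    (hg : ∀ u ∈ uIcc a b, ∀ v ∈ uIcc a b, g u + g v ≤ C * g ((u + v) / 2)) {u : ℝ}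
    (hu : u ∈ uIcc a b) : g u + g (a + b - u) ≤ C * g ((b + a) / 2) := by
  have hreflect_mem : a + b - u ∈ uIcc a b := by
    simpa [uIcc_comm b a] using
      (image_const_sub_uIcc (a + b) a b).subset (mem_image_of_mem (a + b - ·) hu)
  simpa only [add_sub_cancel, add_comm a b] using hg u hu _ hreflect_mem

theorem setIntegral_uIoc_comp_abs_sub {E : Type*} [NormedAddCommGroup E] [NormedSpace ℝ E]
    (g : ℝ → E) (a b : ℝ) : ∫ u in uIoc a b, g |u - a| = ∫ u in (0 : ℝ)..|b - a|, g u := by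
  rcases le_total a b with hab | hab
  · rw [uIoc_of_le hab, ← integral_of_le hab, abs_of_nonneg (sub_nonneg.2 hab), ← sub_self a,
      ← integral_comp_sub_right g a]
    refine integral_congr fun u hu => ?_
    rw [uIcc_of_le hab] at hu
    simp only [abs_of_nonneg (sub_nonneg.2 hu.1)]
  · rw [uIoc_of_ge hab, ← integral_of_le hab, abs_of_nonpos (sub_nonpos.2 hab), neg_sub,
      ← sub_self a, ← integral_comp_sub_left g a]
    refine integral_congr fun u hu => ?_
    rw [uIcc_of_le hab] at hu
    simp only [abs_of_nonpos (sub_nonpos.2 hu.2), neg_sub]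

theorem integral_rpow_abs_sub_uIoc {r : ℝ} (hr : -1 < r) (a b : ℝ) :
    ∫ u in uIoc a b, |u - a| ^ r = |b - a| ^ (r + 1) / (r + 1) := by
  rw [setIntegral_uIoc_comp_abs_sub (fun u => u ^ r), integral_rpow (Or.inl hr),
    Real.zero_rpow (by linarith), sub_zero]

theorem setIntegral_uIoc_le_of_add_reflect_le {g : ℝ → ℝ} {a b M : ℝ}
    (hg : IntervalIntegrable g volume a b)
    (hM : ∀ u ∈ uIcc a b, g u + g (a + b - u) ≤ 2 * M) :
    ∫ u in uIoc a b, g u ≤ |b - a| * M := by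
  wlog hab : a ≤ b generalizing a b
  · rw [uIoc_comm, abs_sub_comm]
    exact this hg.symm (by simpa only [uIcc_comm b a, add_comm b a] using hM) (le_of_not_ge hab)
  have hreflect : IntervalIntegrable (fun u => g (a + b - u)) volume a b := by
    simpa using (hg.comp_sub_left (a + b)).symm
  have hreflect_integral : ∫ u in a..b, g (a + b - u) = ∫ u in a..b, g u := by
    simp [integral_comp_sub_left g (a + b)]
  have hsum : ∫ u in a..b, (g u + g (a + b - u)) ≤ ∫ _ in a..b, 2 * M :=
    integral_mono_on hab (hg.add hreflect) (by simp) (by rwa [uIcc_of_le hab] at hM)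
  rw [integral_add hg hreflect, hreflect_integral, intervalIntegral.integral_const,
    smul_eq_mul] at hsum
  rw [uIoc_of_le hab, ← integral_of_le hab, abs_of_nonneg (sub_nonneg.2 hab)]
  linarith

instance isFiniteMeasure_restrict_uIoc (a b : ℝ) : IsFiniteMeasure (volume.restrict (uIoc a b)) :=
  inferInstanceAs (IsFiniteMeasure (volume.restrict (Ioc _ _)))

theorem memLp_sub_pow_restrict_uIoc (a b : ℝ) (n : ℕ) (r : ENNReal) :
    MemLp (fun u => (u - a) ^ n) r (volume.restrict (uIoc a b)) := by
  refine MemLp.of_bound (by fun_prop) (|b - a| ^ n)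
    (ae_restrict_of_forall_mem measurableSet_uIoc fun u hu => ?_)
  rw [norm_pow, Real.norm_eq_abs]
  exact pow_le_pow_left₀ (abs_nonneg _) (abs_sub_left_of_mem_uIcc (uIoc_subset_uIcc hu)) n

theorem rpow_mul_add_one_rpow_inv_mul_rpow_inv {L p q : ℝ} (hL : 0 ≤ L)
    (hpq : p.HolderConjugate q) (n : ℕ) :
    (L ^ (n * p + 1)) ^ (1 / p) * L ^ (1 / q) = L ^ (n + 1) := by
  have hp := hpq.pos
  have hq := hpq.symm.pos
  have hexponent : (n * p + 1) * (1 / p) + 1 / q = ((n + 1 : ℕ) : ℝ) := by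
    rw [add_mul, one_mul, mul_assoc, mul_one_div_cancel hp.ne', mul_one, add_assoc, one_div,
      one_div, hpq.inv_add_inv_eq_one, Nat.cast_add_one]
  rw [← Real.rpow_mul hL, ← Real.rpow_add_of_nonneg hL (by positivity) (by positivity),
    hexponent, Real.rpow_natCast]

section NormedSpace

variable {E : Type*} [NormedAddCommGroup E]

theorem memLp_top_of_rpow_norm_add_reflect_le {h : ℝ → E} {a b q M : ℝ} {μ : Measure ℝ} (hq : 0 < q)
    (hmeas : AEStronglyMeasurable h (μ.restrict (uIoc a b)))
    (hM : ∀ u ∈ uIcc a b, ‖h u‖ ^ q + ‖h (a + b - u)‖ ^ q ≤ M) :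
    MemLp h ⊤ (μ.restrict (uIoc a b)) := by
  refine memLp_top_of_bound hmeas (M ^ q⁻¹) (ae_restrict_of_forall_mem measurableSet_uIoc ?_)
  intro u hu
  have hle : ‖h u‖ ^ q ≤ M :=
    (le_add_of_nonneg_right (by positivity)).trans (hM u (uIoc_subset_uIcc hu))
  exact (Real.le_rpow_inv_iff_of_pos (by positivity) (hle.trans' (by positivity)) hq).2 hle

variable [NormedSpace ℝ E]

theorem norm_integral_smul_le_Lp_mul_Lq {w : ℝ → ℝ} {h : ℝ → E} {a b p q : ℝ}
    {μ : Measure ℝ} (hpq : p.HolderConjugate q)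
    (hw : MemLp w (ENNReal.ofReal p) (μ.restrict (uIoc a b)))
    (hh : MemLp h (ENNReal.ofReal q) (μ.restrict (uIoc a b))) :
    ‖∫ u in a..b, w u • h u ∂μ‖ ≤
      (∫ u in uIoc a b, ‖w u‖ ^ p ∂μ) ^ (1 / p) * (∫ u in uIoc a b, ‖h u‖ ^ q ∂μ) ^ (1 / q) := by
  calc ‖∫ u in a..b, w u • h u ∂μ‖
      ≤ ∫ u in uIoc a b, ‖w u • h u‖ ∂μ := norm_integral_le_integral_norm_uIoc
    _ = ∫ u in uIoc a b, ‖w u‖ * ‖‖h u‖‖ ∂μ := by simp only [norm_smul, norm_norm]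
    _ ≤ _ := by simpa only [norm_norm] using integral_mul_norm_le_Lp_mul_Lq hpq hw hh.norm

theorem norm_integral_sub_pow_smul_le_of_rpow_norm_add_reflect_le {h : ℝ → E} {k x p q A : ℝ}
    (hpq : p.HolderConjugate q) (hA : 0 ≤ A) (n : ℕ)
    (hmeas : AEStronglyMeasurable h (volume.restrict (uIoc k x)))
    (hreflect : ∀ u ∈ uIcc k x, ‖h u‖ ^ q + ‖h (k + x - u)‖ ^ q ≤ 2 * A ^ q) :
    ‖∫ u in k..x, (u - k) ^ n • h u‖ ≤ |x - k| ^ (n + 1) / (n * p + 1) ^ (1 / p) * A := by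
  have hp := hpq.pos
  have hq := hpq.symm.pos
  have hh : MemLp h (ENNReal.ofReal q) (volume.restrict (uIoc k x)) :=
    (memLp_top_of_rpow_norm_add_reflect_le hq hmeas hreflect).mono_exponent le_top
  have hweight_integral :
      ∫ u in uIoc k x, ‖(u - k) ^ n‖ ^ p = |x - k| ^ (n * p + 1) / (n * p + 1) := by
    simp only [norm_pow, Real.norm_eq_abs, ← Real.rpow_natCast_mul (abs_nonneg _)]
    exact integral_rpow_abs_sub_uIoc (neg_one_lt_zero.trans_le (by positivity)) k x
  have hh_integral : ∫ u in uIoc k x, ‖h u‖ ^ q ≤ |x - k| * A ^ q := by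
    refine setIntegral_uIoc_le_of_add_reflect_le (intervalIntegrable_iff.2 ?_) hreflect
    simpa [IntegrableOn, hq.le] using
      hh.integrable_norm_rpow (by simpa using hq) ENNReal.ofReal_ne_top
  calc ‖∫ u in k..x, (u - k) ^ n • h u‖
      ≤ (∫ u in uIoc k x, ‖(u - k) ^ n‖ ^ p) ^ (1 / p) *
          (∫ u in uIoc k x, ‖h u‖ ^ q) ^ (1 / q) :=
        norm_integral_smul_le_Lp_mul_Lq hpq (memLp_sub_pow_restrict_uIoc k x n _) hh
    _ ≤ (|x - k| ^ (n * p + 1) / (n * p + 1)) ^ (1 / p) * (|x - k| * A ^ q) ^ (1 / q) := by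
        rw [hweight_integral]
        gcongr
    _ = (|x - k| ^ (n * p + 1)) ^ (1 / p) * |x - k| ^ (1 / q) / (n * p + 1) ^ (1 / p) * A := by
        rw [Real.div_rpow (by positivity) (by positivity),
          Real.mul_rpow (by positivity) (by positivity), one_div q, Real.rpow_rpow_inv hA hq.ne']
        ring
    _ = |x - k| ^ (n + 1) / (n * p + 1) ^ (1 / p) * A := by
        rw [rpow_mul_add_one_rpow_inv_mul_rpow_inv (abs_nonneg _) hpq]

theorem norm_integral_sub_pow_smul_le_of_rpow_norm_add_le_midpoint {h : ℝ → E} {k x p q s : ℝ}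
    (hpq : p.HolderConjugate q) (n : ℕ)
    (hmeas : AEStronglyMeasurable h (volume.restrict (uIoc k x)))
    (hmid : ∀ u ∈ uIcc k x, ∀ v ∈ uIcc k x,
      ‖h u‖ ^ q + ‖h v‖ ^ q ≤ 2 ^ s * ‖h ((u + v) / 2)‖ ^ q) :
    ‖∫ u in k..x, (u - k) ^ n • h u‖ ≤
      |x - k| ^ (n + 1) / (n * p + 1) ^ (1 / p) * (2 ^ ((s - 1) / q) * ‖h ((x + k) / 2)‖) := by
  refine norm_integral_sub_pow_smul_le_of_rpow_norm_add_reflect_le hpq (by positivity) n hmeas ?_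
  intro u hu
  calc ‖h u‖ ^ q + ‖h (k + x - u)‖ ^ q
      ≤ 2 ^ s * ‖h ((x + k) / 2)‖ ^ q :=
        add_reflect_le_mul_midpoint (g := fun u => ‖h u‖ ^ q) hmid hu
    _ = 2 * (2 ^ ((s - 1) / q) * ‖h ((x + k) / 2)‖) ^ q := by
        rw [Real.mul_rpow (by positivity) (by positivity), ← Real.rpow_mul zero_le_two,
          div_mul_cancel₀ _ hpq.symm.ne_zero, Real.rpow_sub_one two_ne_zero]
        ring

variable [CompleteSpace E]

theorem aestronglyMeasurable_restrict_of_hasDerivAt {f f' : ℝ → E} {S : Set ℝ}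
    {μ : Measure ℝ} (hS : MeasurableSet S) (hf : ∀ y ∈ S, HasDerivAt f (f' y) y) :
    AEStronglyMeasurable f' (μ.restrict S) :=
  (aestronglyMeasurable_deriv f _).congr <|
    ae_restrict_of_forall_mem hS fun y hy => (hf y hy).deriv

theorem intervalIntegrable_of_hasDerivAt_of_rpow_norm_add_le_midpoint {f f' : ℝ → E}
    {a b q C : ℝ} (hq : 0 < q) (hf : ∀ y ∈ uIcc a b, HasDerivAt f (f' y) y)
    (hmid : ∀ u ∈ uIcc a b, ∀ v ∈ uIcc a b,
      ‖f' u‖ ^ q + ‖f' v‖ ^ q ≤ C * ‖f' ((u + v) / 2)‖ ^ q) :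
    IntervalIntegrable f' volume a b := by
  have hmeas : AEStronglyMeasurable f' (volume.restrict (uIoc a b)) :=
    aestronglyMeasurable_restrict_of_hasDerivAt measurableSet_uIoc
      fun y hy => hf y (uIoc_subset_uIcc hy)
  have hbounded : MemLp f' ⊤ (volume.restrict (uIoc a b)) :=
    memLp_top_of_rpow_norm_add_reflect_le hq hmeas
      fun _ => add_reflect_le_mul_midpoint (g := fun u => ‖f' u‖ ^ q) hmid
  exact intervalIntegrable_iff.2 (hbounded.integrable le_top)

variable {f f' f'' : ℝ → E}

theorem integral_sub_sq_smul_deriv_deriv {k x : ℝ}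
    (hf : ∀ y ∈ uIcc k x, HasDerivAt f (f' y) y) (hf' : ∀ y ∈ uIcc k x, HasDerivAt f' (f'' y) y)
    (hint : IntervalIntegrable f'' volume k x) :
    ∫ u in k..x, (u - k) ^ 2 • f'' u =
      (x - k) ^ 2 • f' x - (2 * (x - k)) • f x + (2 : ℝ) • ∫ u in k..x, f u := by
  have hf'_int : IntervalIntegrable f' volume k x :=
    ContinuousOn.intervalIntegrable (HasDerivAt.continuousOn hf')
  have hparts₂ := integral_smul_deriv_eq_deriv_smul (u := fun u => (u - k) ^ 2)
    (u' := fun u => 2 * (u - k))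
    (fun y _ => by simpa using ((hasDerivAt_id y).sub_const k).fun_pow 2) hf'
    (by apply Continuous.intervalIntegrable; fun_prop) hint
  have hparts₁ := integral_smul_deriv_eq_deriv_smul (u := fun u => 2 * (u - k))
    (u' := fun _ => 2) (fun y _ => by simpa using ((hasDerivAt_id y).sub_const k).const_mul 2) hf
    (by simp) hf'_int
  rw [hparts₂, hparts₁, intervalIntegral.integral_smul]
  simp only [sub_self, mul_zero, zero_smul, ne_eq, OfNat.ofNat_ne_zero, not_false_eq_true,
    zero_pow, sub_zero]
  abel

theorem average_sub_add_smul_deriv_eq_integral {a b x : ℝ} (hab : a ≠ b) (hx : x ∈ uIcc a b)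
    (hf : ∀ y ∈ uIcc a b, HasDerivAt f (f' y) y) (hf' : ∀ y ∈ uIcc a b, HasDerivAt f' (f'' y) y)
    (hint : IntervalIntegrable f'' volume a b) :
    (1 / (b - a)) • (∫ u in a..b, f u) - f x + (x - (a + b) / 2) • f' x =
      (1 / (2 * (b - a))) •
        ((∫ u in a..x, (u - a) ^ 2 • f'' u) - ∫ u in b..x, (u - b) ^ 2 • f'' u) := by
  have hf_int {k : ℝ} (hk : k ∈ uIcc a b) : IntervalIntegrable f volume k x :=
    ContinuousOn.intervalIntegrable
      (HasDerivAt.continuousOn fun y hy => hf y (uIcc_subset_uIcc hk hx hy))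
  have hpeano {k : ℝ} (hk : k ∈ uIcc a b) :=
    have hsub : uIcc k x ⊆ uIcc a b := uIcc_subset_uIcc hk hx
    integral_sub_sq_smul_deriv_deriv (fun y hy => hf y (hsub hy)) (fun y hy => hf' y (hsub hy))
      (hint.mono_set hsub)
  rw [hpeano left_mem_uIcc, hpeano right_mem_uIcc, integral_symm x b,
    ← integral_add_adjacent_intervals (hf_int left_mem_uIcc) (hf_int right_mem_uIcc).symm]
  have : b - a ≠ 0 := sub_ne_zero.2 hab.symm
  match_scalars <;> field_simp <;> ring

theorem stmt12_general {a b p q s x : ℝ} (hab : a < b)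
    (hf : ∀ y ∈ Icc a b, HasDerivAt f (f' y) y) (hf' : ∀ y ∈ Icc a b, HasDerivAt f' (f'' y) y)
    (hpq : p.HolderConjugate q)
    (hmid : ∀ u ∈ Icc a b, ∀ v ∈ Icc a b,
      ‖f'' u‖ ^ q + ‖f'' v‖ ^ q ≤ 2 ^ s * ‖f'' ((u + v) / 2)‖ ^ q)
    (hx : x ∈ Icc a b) :
    ‖(1 / (b - a)) • (∫ u in a..b, f u) - f x + (x - (a + b) / 2) • f' x‖
      ≤ 2 ^ ((s - 1) / q) / ((2 * p + 1) ^ (1 / p) * (b - a)) *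
          (((x - a) ^ 3 * ‖f'' ((x + a) / 2)‖ + (b - x) ^ 3 * ‖f'' ((b + x) / 2)‖) / 2) := by
  have hba : 0 < b - a := sub_pos.2 hab
  have hp : 0 < 2 * p + 1 := by linarith [hpq.pos]
  obtain ⟨hax, hxb⟩ := hx
  have hx : x ∈ uIcc a b := mem_uIcc_of_le hax hxb
  rw [← uIcc_of_le hab.le] at hf hf' hmid
  have hbound {k : ℝ} (hk : k ∈ uIcc a b) : ‖∫ u in k..x, (u - k) ^ 2 • f'' u‖ ≤
      |x - k| ^ 3 / (2 * p + 1) ^ (1 / p) * (2 ^ ((s - 1) / q) * ‖f'' ((x + k) / 2)‖) := by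
    have hsub : uIcc k x ⊆ uIcc a b := uIcc_subset_uIcc hk hx
    exact_mod_cast norm_integral_sub_pow_smul_le_of_rpow_norm_add_le_midpoint hpq 2
      (aestronglyMeasurable_restrict_of_hasDerivAt measurableSet_uIoc
        fun y hy => hf' y (hsub (uIoc_subset_uIcc hy)))
      fun u hu v hv => hmid u (hsub hu) v (hsub hv)
  have hint : IntervalIntegrable f'' volume a b :=
    intervalIntegrable_of_hasDerivAt_of_rpow_norm_add_le_midpoint hpq.symm.pos hf' hmid
  have hbound_a := hbound left_mem_uIcc
  have hbound_b := hbound right_mem_uIcc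
  rw [abs_of_nonneg (sub_nonneg.2 hax)] at hbound_a
  rw [abs_sub_comm, abs_of_nonneg (sub_nonneg.2 hxb), add_comm x b] at hbound_b
  rw [average_sub_add_smul_deriv_eq_integral hab.ne hx hf hf' hint, norm_smul,
    Real.norm_of_nonneg (by positivity)]
  calc _ ≤ 1 / (2 * (b - a)) * (_ + _) := by
        gcongr
        exact (norm_sub_le _ _).trans (add_le_add hbound_a hbound_b)
    _ = _ := by field_simp

end NormedSpace

theorem stmt12 (I : Set ℝ) (hI : Convex ℝ I) (hI0 : I ⊆ Set.Ici (0:ℝ)) (f f' f'' : ℝ → ℝ) (a b : ℝ)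
    (ha : a ∈ interior I) (hb : b ∈ interior I) (hab : a < b)
    (hf' : ∀ y ∈ interior I, HasDerivAt f (f' y) y)
    (hf'' : ∀ y ∈ interior I, HasDerivAt f' (f'' y) y)
    (hfint : IntervalIntegrable f'' MeasureTheory.volume a b)
    (p q : ℝ) (hp : 1 < p) (hq : 1 < q) (hpq : 1 / p + 1 / q = 1)
    (s : ℝ) (hs : s ∈ Set.Ioc (0:ℝ) 1)
    (hconv : ∀ u ∈ Set.Icc a b, ∀ v ∈ Set.Icc a b, ∀ t ∈ Set.Icc (0:ℝ) 1,
      |f'' (t * u + (1 - t) * v)| ^ q ≥ t ^ s * |f'' u| ^ q + (1 - t) ^ s * |f'' v| ^ q) :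
    ∀ x ∈ Set.Icc a b,
      |(1 / (b - a)) * (∫ u in a..b, f u) - f x + (x - (a + b) / 2) * f' x|
        ≤ (2:ℝ) ^ ((s - 1) / q) / ((2 * p + 1) ^ (1 / p) * (b - a)) *
            (((x - a) ^ 3 * |f'' ((x + a) / 2)| + (b - x) ^ 3 * |f'' ((b + x) / 2)|) / 2) := by
  have hsub : Icc a b ⊆ interior I := hI.interior.ordConnected.out ha hb
  exact fun _ => stmt12_general hab (fun y hy => hf' y (hsub hy)) (fun y hy => hf'' y (hsub hy))
    (Real.holderConjugate_iff.2 ⟨hp, by simpa only [one_div] using hpq⟩)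
    fun _ hu _ hv => SConcaveOn.add_le_two_rpow_mul_midpoint (g := (|f'' ·| ^ q)) hconv hu hv
end

section
/- (Hermite–Hadamard inequality for $s$-convex functions, used in the proof of the $s$-concave Ostrowski-type theorem.) Let $s \in (0,1)$ and let $f : [0,\infty) \to [0,\infty)$ be $s$-convex in the second sense. Let $a, b \in [0,\infty)$ with $a < b$, and suppose $f$ is integrable on $[a,b]$. Then $2^{s-1} f\!\left(\frac{a+b}{2}\right) \le \frac{1}{b-a}\int_a^b f(x)\,dx \le \frac{f(a) + f(b)}{s+1}$. -/
open MeasureTheory Set intervalIntegral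

/-!
Parametrize the segment from `x` to `y` by `t ↦ (1 - t) x + t y`, `t ∈ [0, 1]`. The points with
parameters `t` and `1 - t` have the same midpoint as `x` and `y`, so the midpoint inequality at this
pair, integrated over `t`, bounds `f` at the midpoint by the mean of `f`. Integrating
`f ((1 - t) x + t y) ≤ (1 - t) ^ s f x + t ^ s f y` gives the upper bound, since both weights have
integral `1 / (s + 1)`.
-/

/-- `f` is `s`-convex in the second sense on the convex set `D`. The weights are restricted to the
open interval `(0, 1)`, so that the condition never involves the value `0 ^ s` and keeps its usual
meaning for `s = 0` (`P`-functions) and for `s < 0` (Godunova–Levin functions). -/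
def SConvexOn {E : Type*} [AddCommGroup E] [Module ℝ E] (s : ℝ) (D : Set E) (f : E → ℝ) : Prop :=
  Convex ℝ D ∧ ∀ x ∈ D, ∀ y ∈ D, ∀ t ∈ Ioo (0 : ℝ) 1,
    f (t • x + (1 - t) • y) ≤ t ^ s * f x + (1 - t) ^ s * f y

open AffineMap (lineMap)

theorem integral_rpow_zero_one {s : ℝ} (hs : -1 < s) :
    ∫ t in (0 : ℝ)..1, t ^ s = 1 / (s + 1) := by
  rw [integral_rpow (Or.inl hs), Real.one_rpow, Real.zero_rpow (by linarith), sub_zero]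

theorem integral_comp_one_sub {F : Type*} [NormedAddCommGroup F] [NormedSpace ℝ F] (g : ℝ → F) :
    ∫ t in (0 : ℝ)..1, g (1 - t) = ∫ t in (0 : ℝ)..1, g t := by
  rw [integral_comp_sub_left g, sub_self, sub_zero]

theorem integral_one_sub_rpow_zero_one {s : ℝ} (hs : -1 < s) :
    ∫ t in (0 : ℝ)..1, (1 - t) ^ s = 1 / (s + 1) := by
  rw [integral_comp_one_sub (fun t : ℝ ↦ t ^ s), integral_rpow_zero_one hs]

theorem intervalIntegrable_comp_one_sub {F : Type*} [NormedAddCommGroup F] {g : ℝ → F}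
    (hg : IntervalIntegrable g volume 0 1) :
    IntervalIntegrable (fun t ↦ g (1 - t)) volume 0 1 := by
  simpa only [sub_zero, sub_self] using (hg.comp_sub_left 1).symm

section LineMap

variable {F : Type*} [NormedAddCommGroup F] {a b : ℝ}

theorem intervalIntegrable_comp_lineMap {f : ℝ → F} (hf : IntervalIntegrable f volume a b) :
    IntervalIntegrable (fun t : ℝ ↦ f (lineMap a b t)) volume 0 1 := by
  rcases eq_or_ne a b with rfl | hab
  · simp
  have hba : b - a ≠ 0 := sub_ne_zero.mpr hab.symm
  simpa only [AffineMap.lineMap_apply_ring', sub_self, zero_div, div_self hba] using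
    (hf.comp_add_right a).comp_mul_right (c := b - a)

theorem integral_comp_lineMap [NormedSpace ℝ F] (f : ℝ → F) (hab : a ≠ b) :
    ∫ t in (0 : ℝ)..1, f (lineMap a b t) = (b - a)⁻¹ • ∫ x in a..b, f x := by
  simp only [AffineMap.lineMap_apply_ring', mul_comm _ (b - a),
    integral_comp_mul_add f (sub_ne_zero.mpr hab.symm), mul_zero, zero_add, mul_one, sub_add_cancel]

theorem midpoint_lineMap_lineMap_one_sub {E : Type*} [AddCommGroup E] [Module ℝ E] (x y : E)
    (t : ℝ) : midpoint ℝ (lineMap x y t) (lineMap x y (1 - t)) = midpoint ℝ x y := by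
  simp only [AffineMap.lineMap_apply_module, midpoint_eq_smul_add]
  module

end LineMap

namespace SConvexOn

variable {E : Type*} [AddCommGroup E] [Module ℝ E] {s : ℝ} {D : Set E} {f : E → ℝ} {x y : E}

theorem map_lineMap_le (hf : SConvexOn s D f) (hx : x ∈ D) (hy : y ∈ D) {t : ℝ}
    (ht : t ∈ Ioo (0 : ℝ) 1) :
    f (lineMap x y t) ≤ (1 - t) ^ s * f x + t ^ s * f y := by
  rw [AffineMap.lineMap_apply_module, add_comm, add_comm (_ * f x)]
  exact hf.2 y hy x hx t ht

theorem two_rpow_mul_map_midpoint_le (hf : SConvexOn s D f) (hx : x ∈ D) (hy : y ∈ D) :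
    (2 : ℝ) ^ (s - 1) * f (midpoint ℝ x y) ≤ (f x + f y) / 2 := by
  have hmid : f (midpoint ℝ x y) ≤ 2⁻¹ ^ s * (f x + f y) := by
    have h := hf.map_lineMap_le hx hy (t := 2⁻¹) (by norm_num)
    rwa [lineMap_inv_two, show (1 : ℝ) - 2⁻¹ = 2⁻¹ by norm_num, ← mul_add] at h
  have hpow : (2 : ℝ) ^ (s - 1) * 2⁻¹ ^ s = 2⁻¹ := by
    rw [Real.inv_rpow zero_le_two, ← Real.rpow_neg zero_le_two, ← Real.rpow_add two_pos,
      show s - 1 + -s = -1 by ring, Real.rpow_neg_one]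
  calc (2 : ℝ) ^ (s - 1) * f (midpoint ℝ x y)
      ≤ 2 ^ (s - 1) * (2⁻¹ ^ s * (f x + f y)) := by gcongr
    _ = (f x + f y) / 2 := by rw [← mul_assoc, hpow, inv_mul_eq_div]

theorem two_rpow_mul_map_midpoint_le_integral_comp_lineMap (hf : SConvexOn s D f)
    (hx : x ∈ D) (hy : y ∈ D)
    (hint : IntervalIntegrable (fun t : ℝ ↦ f (lineMap x y t)) volume 0 1) :
    (2 : ℝ) ^ (s - 1) * f (midpoint ℝ x y) ≤ ∫ t in (0 : ℝ)..1, f (lineMap x y t) := by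
  set g : ℝ → ℝ := fun t ↦ f (lineMap x y t)
  have hint' : IntervalIntegrable (fun t ↦ g (1 - t)) volume 0 1 :=
    intervalIntegrable_comp_one_sub hint
  have hpair (t : ℝ) (ht : t ∈ Icc (0 : ℝ) 1) :
      (2 : ℝ) ^ (s - 1) * f (midpoint ℝ x y) ≤ (g t + g (1 - t)) / 2 := by
    rw [← midpoint_lineMap_lineMap_one_sub x y t]
    exact hf.two_rpow_mul_map_midpoint_le (hf.1.lineMap_mem hx hy ht)
      (hf.1.lineMap_mem hx hy (Icc.mem_iff_one_sub_mem.mp ht))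
  calc (2 : ℝ) ^ (s - 1) * f (midpoint ℝ x y)
      = ∫ _ in (0 : ℝ)..1, (2 : ℝ) ^ (s - 1) * f (midpoint ℝ x y) := by simp
    _ ≤ ∫ t in (0 : ℝ)..1, (g t + g (1 - t)) / 2 :=
      integral_mono_on zero_le_one intervalIntegrable_const ((hint.add hint').div_const 2) hpair
    _ = ∫ t in (0 : ℝ)..1, g t := by
      rw [intervalIntegral.integral_div, intervalIntegral.integral_add hint hint',
        integral_comp_one_sub, add_self_div_two]

theorem integral_comp_lineMap_le (hf : SConvexOn s D f) (hs : -1 < s) (hx : x ∈ D) (hy : y ∈ D)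
    (hint : IntervalIntegrable (fun t : ℝ ↦ f (lineMap x y t)) volume 0 1) :
    ∫ t in (0 : ℝ)..1, f (lineMap x y t) ≤ (f x + f y) / (s + 1) := by
  have hpow : IntervalIntegrable (fun t : ℝ ↦ t ^ s) volume 0 1 := intervalIntegrable_rpow' hs
  have hleft : IntervalIntegrable (fun t : ℝ ↦ (1 - t) ^ s * f x) volume 0 1 :=
    (intervalIntegrable_comp_one_sub hpow).mul_const _
  have hright : IntervalIntegrable (fun t : ℝ ↦ t ^ s * f y) volume 0 1 := hpow.mul_const _
  calc ∫ t in (0 : ℝ)..1, f (lineMap x y t)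
      ≤ ∫ t in (0 : ℝ)..1, ((1 - t) ^ s * f x + t ^ s * f y) :=
      integral_mono_on_of_le_Ioo zero_le_one hint (hleft.add hright)
        fun _ ht ↦ hf.map_lineMap_le hx hy ht
    _ = 1 / (s + 1) * f x + 1 / (s + 1) * f y := by
      rw [intervalIntegral.integral_add hleft hright, intervalIntegral.integral_mul_const,
        intervalIntegral.integral_mul_const, integral_one_sub_rpow_zero_one hs,
        integral_rpow_zero_one hs]
    _ = (f x + f y) / (s + 1) := by ring

end SConvexOn

theorem stmt14_general {f : ℝ → ℝ} {s : ℝ} (hs : -1 < s) {D : Set ℝ} (hf : SConvexOn s D f)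
    {a b : ℝ} (ha : a ∈ D) (hb : b ∈ D) (hab : a ≠ b) (hfint : IntervalIntegrable f volume a b) :
    (2 : ℝ) ^ (s - 1) * f ((a + b) / 2) ≤ (1 / (b - a)) * (∫ x in a..b, f x)
      ∧ (1 / (b - a)) * (∫ x in a..b, f x) ≤ (f a + f b) / (s + 1) := by
  have hint := intervalIntegrable_comp_lineMap hfint
  have hmid : midpoint ℝ a b = (a + b) / 2 := by
    rw [midpoint_eq_smul_add, invOf_eq_inv, smul_eq_mul, inv_mul_eq_div]
  rw [one_div, ← smul_eq_mul (b - a)⁻¹, ← integral_comp_lineMap f hab, ← hmid]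
  exact ⟨hf.two_rpow_mul_map_midpoint_le_integral_comp_lineMap ha hb hint,
    hf.integral_comp_lineMap_le hs ha hb hint⟩

theorem stmt14 (f : ℝ → ℝ) (s : ℝ) (hs : s ∈ Set.Ioo (0:ℝ) 1)
    (hf0 : ∀ x ∈ Set.Ici (0:ℝ), 0 ≤ f x)
    (hconv : ∀ u ∈ Set.Ici (0:ℝ), ∀ v ∈ Set.Ici (0:ℝ), ∀ t ∈ Set.Icc (0:ℝ) 1,
      f (t * u + (1 - t) * v) ≤ t ^ s * f u + (1 - t) ^ s * f v)
    (a b : ℝ) (ha : 0 ≤ a) (hb : 0 ≤ b) (hab : a < b)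
    (hfint : IntervalIntegrable f MeasureTheory.volume a b) :
    (2:ℝ) ^ (s - 1) * f ((a + b) / 2) ≤ (1 / (b - a)) * (∫ x in a..b, f x)
      ∧ (1 / (b - a)) * (∫ x in a..b, f x) ≤ (f a + f b) / (s + 1) :=
  stmt14_general (neg_one_lt_zero.trans hs.1) ⟨convex_Ici 0, fun u hu v hv t ht ↦
    hconv u hu v hv t (Ioo_subset_Icc_self ht)⟩ ha hb hab.ne hfint
end
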